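/- Let K satisfy Assumption A, let T > 0, and let f be a mass-conserving weak solution of the coagulation equation on [0,T] with kernel K and initial datum f_in. Let x₁, x₂ ∈ (0,∞) with x₁ < x₂ and η₀ ∈ (0, min(1, x₁)) be such that x₂ − x₁ ≥ 3η₀ and f_in(B(x₁, η₀/2)) > 0, f_in(B(x₂, η₀/2)) > 0. Then for every t ∈ (0,T] there exists a constant C(t,x₁,x₂,η₀) > 0 such that ∫_{B(x₁+x₂, 5η₀/2)} f(dv,t) ≥ C(t,x₁,x₂,η₀). -/

import Mathlib

open MeasureTheory Set Filter

noncomputable section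

/-- Assumption A on the coagulation kernel `K(v,v') = h(v,v') g(v/(v+v'))`. -/
structure KernelAssumptionA (K : ℝ → ℝ → ℝ) (h : ℝ → ℝ → ℝ) (g : ℝ → ℝ)
    (γ H H₀ H₁ G₀ G₁ k : ℝ) : Prop where
  K_nonneg : ∀ v v', 0 ≤ v → 0 ≤ v' → 0 ≤ K v v'
  K_eq : ∀ v v', 0 ≤ v → 0 ≤ v' → 0 < v + v' →
      K v v' = h v v' * g (v / (v + v'))
  h_cont : ContinuousOn (fun p : ℝ × ℝ => h p.1 p.2) (Ici 0 ×ˢ Ici 0)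
  h_symm : ∀ v v', h v v' = h v' v
  γ_gt_one : 1 < γ
  H_gt_one : 1 < H
  H₀_pos : 0 < H₀
  h_lower : ∀ v v', 0 ≤ v → 0 ≤ v' → H < v + v' →
      H₀ * (v ^ γ + v' ^ γ) ≤ h v v'
  h_posOn : ∀ R : ℝ, 0 < R → ∃ C : ℝ, 0 < C ∧
      ∀ v ∈ Icc (1 / R) R, ∀ v' ∈ Icc (1 / R) R, C ≤ h v v'
  H₁_pos : 0 < H₁
  h_upper : ∀ v v', 0 ≤ v → 0 ≤ v' → h v v' ≤ H₁ * (v ^ γ + v' ^ γ)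
  g_cont : ContinuousOn g (Icc 0 1)
  g_symm : ∀ x ∈ Icc (0 : ℝ) 1, g x = g (1 - x)
  g_half : g (1 / 2) = 0
  G₀_pos : 0 < G₀
  G₁_pos : 0 < G₁
  k_ge_one : 1 ≤ k
  g_lower : ∀ x ∈ Icc (0 : ℝ) 1, G₀ * |x - 1 / 2| ^ k ≤ g x
  g_upper : ∀ x ∈ Icc (0 : ℝ) 1, g x ≤ G₁

/-- Weak solution of the coagulation equation on `[0, T]` with kernel `K`
and initial datum `fin`, in the sense of measures on `(0,∞)`. -/
structure IsWeakSolution (K : ℝ → ℝ → ℝ) (γ T : ℝ)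
    (f : ℝ → Measure ℝ) (fin : Measure ℝ) : Prop where
  conc : ∀ t ∈ Icc (0 : ℝ) T, f t (Iic 0) = 0
  time_cont : ∀ φ : ℝ → ℝ, Continuous φ → (∃ M : ℝ, ∀ v, |φ v| ≤ M) →
      ContinuousOn (fun t => ∫ v, φ v ∂(f t)) (Icc (0 : ℝ) T)
  moment_bound : ∃ C : ℝ, ∀ t ∈ Icc (0 : ℝ) T,
      Integrable (fun v => 1 + v ^ γ) (f t) ∧ (∫ v, (1 + v ^ γ) ∂(f t)) ≤ C
  weak_form : ∀ φ : ℝ → ℝ, Continuous φ → HasCompactSupport φ →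
      tsupport φ ⊆ Ioi 0 → ∀ t ∈ Icc (0 : ℝ) T,
      (∫ v, φ v ∂(f t)) - (∫ v, φ v ∂fin) =
        (1 / 2) * ∫ s in (0 : ℝ)..t,
          (∫ v, (∫ v', K v v' * (φ (v + v') - φ v - φ v') ∂(f s)) ∂(f s))

/-- The solution conserves mass on `[0, T]`. -/
def IsMassConserving (T : ℝ) (f : ℝ → Measure ℝ) (fin : Measure ℝ) : Prop :=
  Integrable (fun v => v) fin ∧
    ∀ t ∈ Icc (0 : ℝ) T,
      Integrable (fun v => v) (f t) ∧ (∫ v, v ∂(f t)) = ∫ v, v ∂fin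

/-- `μ` is a single Dirac measure `M • δ_V` with `M, V ∈ (0,∞)`. -/
def IsSingleDirac (μ : Measure ℝ) : Prop :=
  ∃ M V : ℝ, 0 < M ∧ 0 < V ∧ μ = ENNReal.ofReal M • Measure.dirac V

/-- Measurability in time of a weakly continuous family of finite measures. -/
lemma aux_meas (f : ℝ → Measure ℝ) (T C : ℝ)
    (hfin : ∀ t ∈ Icc (0:ℝ) T, IsFiniteMeasure (f t))
    (hC : ∀ t ∈ Icc (0:ℝ) T, f t univ ≤ ENNReal.ofReal C)
    (hcont : ∀ φ : ℝ → ℝ, Continuous φ → (∃ M : ℝ, ∀ v, |φ v| ≤ M) →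
      ContinuousOn (fun t => ∫ v, φ v ∂(f t)) (Icc (0 : ℝ) T))
    (F : ℝ → ℝ → ℝ) (hF : Measurable (Function.uncurry F)) :
    AEStronglyMeasurable (fun s => ∫ v, (∫ v', F v v' ∂(f s)) ∂(f s))
      (volume.restrict (Icc 0 T)) := by
  classical
  set κ : ℝ → Measure ℝ := fun s => if s ∈ Icc (0:ℝ) T then f s else 0 with hκ
  have hκfin : ∀ s, IsFiniteMeasure (κ s) := by
    intro s
    by_cases hs : s ∈ Icc (0:ℝ) T
    · simp only [hκ, if_pos hs]; exact hfin s hs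
    · simp only [hκ, if_neg hs]; infer_instance
  have hmeas_int : ∀ φ : ℝ → ℝ, Continuous φ → (∃ M : ℝ, ∀ v, |φ v| ≤ M) →
      Measurable (fun t => ∫ v, φ v ∂(κ t)) := by
    intro φ h1 h2
    have : (fun t => ∫ v, φ v ∂(κ t)) =
        (Icc (0:ℝ) T).piecewise (fun t => ∫ v, φ v ∂(f t)) (fun _ => (0:ℝ)) := by
      funext t
      by_cases hs : t ∈ Icc (0:ℝ) T
      · simp only [hκ, if_pos hs, Set.piecewise_eq_of_mem _ _ _ hs]
      · simp only [hκ, if_neg hs, Set.piecewise_eq_of_notMem _ _ _ hs, integral_zero_measure]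
    rw [this]
    exact (hcont φ h1 h2).measurable_piecewise continuousOn_const measurableSet_Icc
  have hclosed : ∀ A : Set ℝ, IsClosed A → Measurable (fun s => κ s A) := by
    intro A hA
    have hpos : ∀ n : ℕ, (0:ℝ) < 1 / ((n:ℝ) + 1) := fun n => by positivity
    have hlim := fun s => tendsto_lintegral_thickenedIndicator_of_isClosed (κ s) hA hpos
      tendsto_one_div_add_atTop_nhds_zero_nat
    refine measurable_of_tendsto_metrizable (f := fun n s =>
      ∫⁻ ω, (thickenedIndicator (hpos n) A ω : ENNReal) ∂(κ s)) (fun n => ?_)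
      (tendsto_pi_nhds.2 hlim)
    have : (fun s => ∫⁻ ω, (thickenedIndicator (hpos n) A ω : ENNReal) ∂(κ s)) =
        fun s => ENNReal.ofReal (∫ ω, (thickenedIndicator (hpos n) A ω : ℝ) ∂(κ s)) := by
      funext s
      rw [lintegral_coe_eq_integral]
      exact integrable_thickenedIndicator A (hpos n)
    rw [this]
    refine (hmeas_int _ ?_ ⟨1, fun v => ?_⟩).ennreal_ofReal
    · exact NNReal.continuous_coe.comp (thickenedIndicator (hpos n) A).continuous
    · rw [abs_of_nonneg (NNReal.coe_nonneg _)]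
      exact_mod_cast thickenedIndicator_le_one (hpos n) A v
  have hmeas : Measurable κ := by
    refine Measurable.measure_of_isPiSystem (S := {s | IsClosed s}) ?_ isPiSystem_isClosed
      (fun s hs => hclosed s hs) (hclosed _ isClosed_univ)
    rw [BorelSpace.measurable_eq (α := ℝ), borel_eq_generateFrom_isClosed]
  let k : ProbabilityTheory.Kernel ℝ ℝ := ⟨κ, hmeas⟩
  have hkf : ProbabilityTheory.IsFiniteKernel k := by
    refine ⟨ENNReal.ofReal C, ENNReal.ofReal_lt_top, fun s => ?_⟩
    change κ s univ ≤ _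
    by_cases hs : s ∈ Icc (0:ℝ) T
    · simp only [hκ, if_pos hs]; exact hC s hs
    · simp only [hκ, if_neg hs]; simp
  have h1 : StronglyMeasurable (Function.uncurry fun (s v : ℝ) => ∫ v', F v v' ∂(k s)) := by
    have := StronglyMeasurable.integral_kernel_prod_right
      (κ := k.comap (Prod.fst : ℝ × ℝ → ℝ) measurable_fst)
      (f := fun (p : ℝ × ℝ) (v' : ℝ) => F p.2 v') (by
        apply Measurable.stronglyMeasurable
        exact hF.comp ((measurable_snd.comp measurable_fst).prodMk measurable_snd))
    exact this
  have h2 : StronglyMeasurable (fun s => ∫ v, (∫ v', F v v' ∂(k s)) ∂(k s)) :=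
    StronglyMeasurable.integral_kernel_prod_right h1
  refine h2.aestronglyMeasurable.congr ?_
  filter_upwards [ae_restrict_mem measurableSet_Icc] with s hs
  change (∫ v, (∫ v', F v v' ∂(κ s)) ∂(κ s)) = _
  simp only [hκ, if_pos hs]

/-- Bounds at a fixed time. -/
lemma aux_slice (μ : Measure ℝ) [IsFiniteMeasure μ] (hμ : ∀ᵐ v ∂μ, 0 < v)
    (w a b c : ℝ → ℝ) (hw : Integrable w μ) (C : ℝ) (hC : ∫ v, w v ∂μ ≤ C)
    (hw0 : ∀ v, 0 < v → 0 ≤ w v)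
    (ha : Integrable a μ) (hb : Integrable b μ) (hc : Integrable c μ) (hc0 : ∀ v, 0 ≤ c v)
    (F : ℝ → ℝ → ℝ) (hF : Measurable (Function.uncurry F)) (B κ D : ℝ) (hB : 0 ≤ B) (hD : 0 ≤ D)
    (hFb : ∀ v v', 0 < v → 0 < v' → |F v v'| ≤ B * (w v * w v'))
    (hFl : ∀ v v', 0 < v → 0 < v' →
      κ * (a v * b v') - D * (w v' * c v) - D * (w v * c v') ≤ F v v') :
    |∫ v, (∫ v', F v v' ∂μ) ∂μ| ≤ B * C ^ 2 ∧
    κ * ((∫ v, a v ∂μ) * (∫ v, b v ∂μ)) - 2 * D * C * (∫ v, c v ∂μ) ≤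
      ∫ v, (∫ v', F v v' ∂μ) ∂μ := by
  have hm0 : 0 ≤ ∫ v, w v ∂μ := integral_nonneg_of_ae (hμ.mono fun v hv => hw0 v hv)
  have hc1 : 0 ≤ ∫ v, c v ∂μ := integral_nonneg hc0
  have hinner : ∀ v, 0 < v → Integrable (F v) μ := by
    intro v hv
    refine Integrable.mono' ((hw.const_mul (w v)).const_mul B)
      (hF.comp measurable_prodMk_left).aestronglyMeasurable ?_
    filter_upwards [hμ] with v' hv'
    exact hFb v v' hv hv'
  have hibd : ∀ v, 0 < v → |∫ v', F v v' ∂μ| ≤ B * (w v * ∫ v', w v' ∂μ) := by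
    intro v hv
    have := norm_integral_le_of_norm_le (f := F v) ((hw.const_mul (w v)).const_mul B)
      (hμ.mono fun v' hv' => hFb v v' hv hv')
    rwa [integral_const_mul, integral_const_mul] at this
  have hIm : AEStronglyMeasurable (fun v => ∫ v', F v v' ∂μ) μ :=
    (StronglyMeasurable.integral_prod_right hF.stronglyMeasurable).aestronglyMeasurable
  have hgi : Integrable (fun v => B * (w v * ∫ v', w v' ∂μ)) μ :=
    (hw.mul_const _).const_mul B
  have hI : Integrable (fun v => ∫ v', F v v' ∂μ) μ :=
    Integrable.mono' hgi hIm (hμ.mono fun v hv => hibd v hv)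
  constructor
  · have := norm_integral_le_of_norm_le (f := fun v => ∫ v', F v v' ∂μ) hgi (hμ.mono fun v hv => hibd v hv)
    rw [integral_const_mul, integral_mul_const] at this
    refine this.trans ?_
    rw [sq]
    exact mul_le_mul_of_nonneg_left (mul_le_mul hC hC hm0 (hm0.trans hC)) hB
  · have hlow : ∀ v, 0 < v → κ * (a v * ∫ v', b v' ∂μ) - D * ((∫ v', w v' ∂μ) * c v)
        - D * (w v * ∫ v', c v' ∂μ) ≤ ∫ v', F v v' ∂μ := by
      intro v hv
      have i1 : Integrable (fun v' => κ * (a v * b v')) μ := (hb.const_mul _).const_mul _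
      have i2 : Integrable (fun v' => D * (w v' * c v)) μ := (hw.mul_const _).const_mul _
      have i3 : Integrable (fun v' => D * (w v * c v')) μ := (hc.const_mul _).const_mul _
      have := integral_mono_ae ((i1.sub i2).sub i3) (hinner v hv)
        (hμ.mono fun v' hv' => hFl v v' hv hv')
      have e : ∫ v', ((((fun v' => κ * (a v * b v')) - fun v' => D * (w v' * c v)) -
          fun v' => D * (w v * c v')) v') ∂μ = κ * (a v * ∫ v', b v' ∂μ) -
          D * ((∫ v', w v' ∂μ) * c v) - D * (w v * ∫ v', c v' ∂μ) := by
        rw [integral_sub' (i1.sub i2) i3, integral_sub' i1 i2]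
        simp only [integral_const_mul, integral_mul_const]
      rw [e] at this
      exact this
    have i1 : Integrable (fun v => κ * (a v * ∫ v', b v' ∂μ)) μ := (ha.mul_const _).const_mul _
    have i2 : Integrable (fun v => D * ((∫ v', w v' ∂μ) * c v)) μ := (hc.const_mul _).const_mul _
    have i3 : Integrable (fun v => D * (w v * ∫ v', c v' ∂μ)) μ := (hw.mul_const _).const_mul _
    have := integral_mono_ae ((i1.sub i2).sub i3) hI (hμ.mono fun v hv => hlow v hv)
    rw [integral_sub' (i1.sub i2) i3, integral_sub' i1 i2] at this
    simp only [integral_const_mul, integral_mul_const] at this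
    refine le_trans ?_ this
    have : D * ((∫ v, w v ∂μ) * ∫ v, c v ∂μ) ≤ D * (C * ∫ v, c v ∂μ) :=
      mul_le_mul_of_nonneg_left (mul_le_mul_of_nonneg_right hC hc1) hD
    linarith

/-- Gronwall-type positivity. -/
lemma aux_gronwall (T L : ℝ) (hL : 0 ≤ L) (y a p : ℝ → ℝ)
    (hy : ContinuousOn y (Icc 0 T)) (hy0 : ∀ t ∈ Icc 0 T, 0 ≤ y t)
    (ha : IntegrableOn a (Icc 0 T))
    (hya : ∀ t ∈ Icc 0 T, y t - y 0 = ∫ s in (0:ℝ)..t, a s)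
    (hp : ContinuousOn p (Icc 0 T)) (hp0 : ∀ t ∈ Icc 0 T, 0 ≤ p t) (hpp : 0 < p 0)
    (hap : ∀ s ∈ Icc 0 T, p s - L * y s ≤ a s) :
    ∀ t ∈ Ioc 0 T, 0 < y t := by
  intro t ht
  have ht0 : 0 < t := ht.1
  have hsub : ∀ u v, 0 ≤ u → u ≤ v → v ≤ T → uIcc u v ⊆ Icc 0 T := by
    intro u v h1 h2 h3
    rw [uIcc_of_le h2]; exact Icc_subset_Icc h1 h3
  have yi : ∀ u v, 0 ≤ u → u ≤ v → v ≤ T → IntervalIntegrable y volume u v := fun u v h1 h2 h3 =>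
    (hy.mono (hsub u v h1 h2 h3)).intervalIntegrable
  have pi' : ∀ u v, 0 ≤ u → u ≤ v → v ≤ T → IntervalIntegrable p volume u v := fun u v h1 h2 h3 =>
    (hp.mono (hsub u v h1 h2 h3)).intervalIntegrable
  have ai : ∀ u v, 0 ≤ u → u ≤ v → v ≤ T → IntervalIntegrable a volume u v := fun u v h1 h2 h3 =>
    (ha.mono_set (hsub u v h1 h2 h3)).intervalIntegrable
  set Y : ℝ → ℝ := fun s => ∫ r in (0:ℝ)..s, y r with hY
  have key : ∀ s, 0 ≤ s → s ≤ t → y s + L * Y s + ∫ r in s..t, p r ≤ y t + L * Y t := by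
    intro s h0 hst
    have e1 : Y t - Y s = ∫ r in s..t, y r :=
      intervalIntegral.integral_interval_sub_left (yi 0 t le_rfl ht0.le ht.2)
        (yi 0 s le_rfl h0 (hst.trans ht.2))
    have e2 : y t - y s = ∫ r in s..t, a r := by
      rw [← intervalIntegral.integral_interval_sub_left (ai 0 t le_rfl ht0.le ht.2)
        (ai 0 s le_rfl h0 (hst.trans ht.2)), ← hya t ⟨ht0.le, ht.2⟩,
        ← hya s ⟨h0, hst.trans ht.2⟩]
      ring
    have e3 : ∫ r in s..t, p r ≤ ∫ r in s..t, (a r + L * y r) := by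
      refine intervalIntegral.integral_mono_on hst (pi' s t h0 hst ht.2)
        ((ai s t h0 hst ht.2).add ((yi s t h0 hst ht.2).const_mul L)) ?_
      intro r hr
      have := hap r ⟨h0.trans hr.1, hr.2.trans ht.2⟩
      linarith
    rw [intervalIntegral.integral_add (ai s t h0 hst ht.2) ((yi s t h0 hst ht.2).const_mul L),
      intervalIntegral.integral_const_mul, ← e1, ← e2] at e3
    linarith
  set M := y t + L * Y t with hM
  have hM0 : 0 < M := by
    have h1 := key 0 le_rfl ht0.le
    have h2 : 0 < ∫ r in (0:ℝ)..t, p r := by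
      refine intervalIntegral.integral_pos ht0 (hp.mono (Icc_subset_Icc_right ht.2)) ?_
        ⟨0, ⟨le_rfl, ht0.le⟩, hpp⟩
      intro x hx; exact hp0 x ⟨hx.1.le, hx.2.trans ht.2⟩
    have h3 : Y 0 = 0 := intervalIntegral.integral_same
    have h4 := hy0 0 ⟨le_rfl, ht0.le.trans ht.2⟩
    rw [h3] at h1
    linarith
  have hYd : ∀ s ∈ Ioo 0 t, HasDerivAt Y (y s) s := by
    intro s hs
    have hn : Icc 0 T ∈ nhds s := Icc_mem_nhds hs.1 (hs.2.trans_le ht.2)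
    exact intervalIntegral.integral_hasDerivAt_right (yi 0 s le_rfl hs.1.le (hs.2.le.trans ht.2))
      (ContinuousOn.stronglyMeasurableAtFilter_nhdsWithin (s := Icc 0 T) hy measurableSet_Icc s
        |>.filter_mono (by rw [nhdsWithin_eq_nhds.2 hn])) (hy.continuousAt hn)
  have hZd : ∀ s ∈ Ioo 0 t, HasDerivAt (fun s => Real.exp (L * s) * (M - L * Y s))
      (Real.exp (L * s) * L * (M - L * Y s) + Real.exp (L * s) * (-(L * y s))) s := by
    intro s hs
    have h1 : HasDerivAt (fun s => Real.exp (L * s)) (Real.exp (L * s) * L) s := by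
      simpa using ((hasDerivAt_id s).const_mul L).exp
    have h2 : HasDerivAt (fun s => M - L * Y s) (-(L * y s)) s :=
      ((hYd s hs).const_mul L).const_sub M
    exact h1.mul h2
  have hYc : ContinuousOn Y (Icc 0 t) := by
    have := intervalIntegral.continuousOn_primitive_interval (μ := volume) (f := y) (a := 0) (b := t)
      (by rw [uIcc_of_le ht0.le]; exact (hy.mono (Icc_subset_Icc_right ht.2)).integrableOn_Icc)
    rwa [uIcc_of_le ht0.le] at this
  have hmono : MonotoneOn (fun s => Real.exp (L * s) * (M - L * Y s)) (Icc 0 t) := by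
    refine monotoneOn_of_deriv_nonneg (convex_Icc 0 t) ?_ ?_ ?_
    · exact (Continuous.continuousOn (by fun_prop)).mul
        (continuousOn_const.sub (continuousOn_const.mul hYc))
    · rw [interior_Icc]
      exact fun s hs => (hZd s hs).differentiableAt.differentiableWithinAt
    · rw [interior_Icc]
      intro s hs
      rw [(hZd s hs).deriv]
      have h1 := key s hs.1.le hs.2.le
      have h2 : 0 ≤ ∫ r in s..t, p r := intervalIntegral.integral_nonneg hs.2.le
        (fun u hu => hp0 u ⟨hs.1.le.trans hu.1, hu.2.trans ht.2⟩)
      have : 0 ≤ Real.exp (L * s) * (L * (M - L * Y s - y s)) := by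
        refine mul_nonneg (Real.exp_pos _).le (mul_nonneg hL (by linarith))
      linarith
  have h := hmono ⟨le_rfl, ht0.le⟩ ⟨ht0.le, le_rfl⟩ ht0.le
  have hY0 : Y 0 = 0 := intervalIntegral.integral_same
  have hMy : M - L * Y t = y t := by rw [hM]; ring
  simp only [hY0, hMy, mul_zero, Real.exp_zero, one_mul, sub_zero] at h
  by_contra hcon
  have : Real.exp (L * t) * y t ≤ 0 :=
    mul_nonpos_of_nonneg_of_nonpos (Real.exp_pos _).le (not_lt.1 hcon)
  linarith

/-- Tent function. -/
def tent (c r : ℝ) : ℝ → ℝ := fun v => max 0 (r - |v - c|)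

lemma tent_cont (c r : ℝ) : Continuous (tent c r) := by unfold tent; fun_prop

lemma tent_nonneg (c r v : ℝ) : 0 ≤ tent c r v := le_max_left _ _

lemma tent_le (c r v : ℝ) (hr : 0 ≤ r) : tent c r v ≤ r :=
  max_le hr (by linarith [abs_nonneg (v - c)])

lemma tent_pos_iff (c r v : ℝ) : 0 < tent c r v ↔ |v - c| < r := by
  unfold tent; rw [lt_max_iff]; simp

lemma tent_zero (c r v : ℝ) (h : ¬ |v - c| < r) : tent c r v = 0 :=
  le_antisymm (not_lt.1 fun h' => h ((tent_pos_iff c r v).1 h')) (tent_nonneg c r v)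

lemma tent_tsupport (c r : ℝ) : tsupport (tent c r) ⊆ Metric.closedBall c r := by
  refine closure_minimal ?_ Metric.isClosed_closedBall
  intro v hv
  by_contra h
  refine hv (tent_zero c r v fun h' => h ?_)
  rw [Metric.mem_closedBall, Real.dist_eq]; exact h'.le

lemma tent_compact (c r : ℝ) : HasCompactSupport (tent c r) :=
  (isCompact_closedBall c r).of_isClosed_subset (isClosed_tsupport _) (tent_tsupport c r)

lemma tent_tsupport_pos (c r : ℝ) (h : r < c) : tsupport (tent c r) ⊆ Ioi 0 := by
  intro v hv
  have := tent_tsupport c r hv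
  rw [Metric.mem_closedBall, Real.dist_eq] at this
  have := (abs_le.1 this).1
  simp only [mem_Ioi]; linarith

lemma tent_integrable (μ : Measure ℝ) [IsFiniteMeasure μ] (c r : ℝ) : Integrable (tent c r) μ :=
  (tent_cont c r).integrable_of_hasCompactSupport (tent_compact c r)

lemma tent_integral_pos (μ : Measure ℝ) [IsFiniteMeasure μ] (c r : ℝ) :
    0 < ∫ v, tent c r v ∂μ ↔ 0 < μ (Metric.ball c r) := by
  rw [integral_pos_iff_support_of_nonneg (fun v => tent_nonneg c r v) (tent_integrable μ c r)]
  have : Function.support (tent c r) = Metric.ball c r := by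
    ext v
    rw [Metric.mem_ball, Real.dist_eq, ← tent_pos_iff, Function.mem_support]
    exact ⟨fun h => lt_of_le_of_ne (tent_nonneg c r v) h.symm, fun h => h.ne'⟩
  rw [this]

lemma aux_finite (μ : Measure ℝ) (hμ : ∀ᵐ v ∂μ, 0 < v) (γ : ℝ)
    (h : Integrable (fun v : ℝ => 1 + v ^ γ) μ) : IsFiniteMeasure μ := by
  have : Integrable (fun _ : ℝ => (1:ℝ)) μ := by
    refine Integrable.mono' h aestronglyMeasurable_const ?_
    filter_upwards [hμ] with v hv
    have := Real.rpow_nonneg hv.le γ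
    simp; linarith
  rcases (integrable_const_iff (c := (1:ℝ))).1 this with h | h
  · norm_num at h
  · exact h

lemma aux_ae_pos (μ : Measure ℝ) (h : μ (Iic 0) = 0) : ∀ᵐ v ∂μ, 0 < v := by
  rw [ae_iff]; convert h using 2; ext; simp

/-- **Induction basis.** If `f_in` charges the balls `B(x₁, η₀/2)` and
`B(x₂, η₀/2)` with `x₂ - x₁ ≥ 3η₀`, then for every `t ∈ (0,T]` the solution charges
the ball `B(x₁+x₂, 5η₀/2)` by a positive constant depending on `t, x₁, x₂, η₀`. -/
theorem induction_basis
    (K h : ℝ → ℝ → ℝ) (g : ℝ → ℝ) (γ H H₀ H₁ G₀ G₁ k : ℝ)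
    (hK : KernelAssumptionA K h g γ H H₀ H₁ G₀ G₁ k)
    (T : ℝ) (hT : 0 < T)
    (fin : Measure ℝ) (hconc : fin (Iic 0) = 0)
    (hγmom : Integrable (fun v => 1 + v ^ γ) fin)
    (f : ℝ → Measure ℝ) (hf : IsWeakSolution K γ T f fin)
    (hmc : IsMassConserving T f fin)
    (x₁ x₂ η₀ : ℝ) (hx₁ : 0 < x₁) (hx₁₂ : x₁ < x₂)
    (hη₀ : η₀ ∈ Ioo 0 (min 1 x₁)) (hsep : 3 * η₀ ≤ x₂ - x₁)
    (hA : 0 < fin (Metric.ball x₁ (η₀ / 2)))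
    (hB : 0 < fin (Metric.ball x₂ (η₀ / 2))) :
    ∀ t ∈ Ioc (0 : ℝ) T, ∃ C : ℝ, 0 < C ∧
      ENNReal.ofReal C ≤ f t (Metric.ball (x₁ + x₂) (5 * η₀ / 2)) := by
  have hη : 0 < η₀ := hη₀.1
  have hη1 : η₀ < 1 := hη₀.2.trans_le (min_le_left _ _)
  have hηx : η₀ < x₁ := hη₀.2.trans_le (min_le_right _ _)
  have hx₂ : 0 < x₂ := hx₁.trans hx₁₂
  have hγ0 : 0 < γ := by linarith [hK.γ_gt_one]
  -- test functions
  set a := tent x₁ (η₀ / 2) with ha_def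
  set b := tent x₂ (η₀ / 2) with hb_def
  set c := tent (x₁ + x₂) (5 * η₀ / 2) with hc_def
  set w : ℝ → ℝ := fun v => 1 + v ^ γ with hw_def
  have hw1 : ∀ v, 0 < v → 1 ≤ w v := fun v hv => by
    have := Real.rpow_nonneg hv.le γ
    simp only [hw_def]; linarith
  obtain ⟨C₀, hC₀⟩ := hf.moment_bound
  set C := max C₀ 0 with hC_def
  have hC0 : 0 ≤ C := le_max_right _ _
  have hmom : ∀ t ∈ Icc (0:ℝ) T, Integrable w (f t) ∧ ∫ v, w v ∂(f t) ≤ C := fun t ht =>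
    ⟨(hC₀ t ht).1, (hC₀ t ht).2.trans (le_max_left _ _)⟩
  have hpos : ∀ t ∈ Icc (0:ℝ) T, ∀ᵐ v ∂(f t), 0 < v := fun t ht => aux_ae_pos _ (hf.conc t ht)
  have hfinm : ∀ t ∈ Icc (0:ℝ) T, IsFiniteMeasure (f t) := fun t ht =>
    aux_finite _ (hpos t ht) γ (hmom t ht).1
  have hfin0 : IsFiniteMeasure fin := aux_finite _ (aux_ae_pos _ hconc) γ hγmom
  have hmass : ∀ t ∈ Icc (0:ℝ) T, f t univ ≤ ENNReal.ofReal C := by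
    intro t ht
    have := hfinm t ht
    rw [← ofReal_measureReal]
    refine ENNReal.ofReal_le_ofReal (le_trans ?_ (hmom t ht).2)
    have := integral_mono_ae (integrable_const (1:ℝ)) (hmom t ht).1
      ((hpos t ht).mono fun v hv => hw1 v hv)
    simpa using this
  have hcm : c = tent (x₁ + x₂) (5 * η₀ / 2) := rfl
  have hcc : Continuous c := tent_cont _ _
  have hc0 : ∀ v, 0 ≤ c v := tent_nonneg _ _
  have hc3 : ∀ v, c v ≤ 3 := fun v => (tent_le _ _ v (by linarith)).trans (by linarith)
  have ha0 : ∀ v, 0 ≤ a v := tent_nonneg _ _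
  have hb0 : ∀ v, 0 ≤ b v := tent_nonneg _ _
  have ha1 : ∀ v, a v ≤ 1 := fun v => (tent_le _ _ v (by linarith)).trans (by linarith)
  have hb1 : ∀ v, b v ≤ 1 := fun v => (tent_le _ _ v (by linarith)).trans (by linarith)
  -- kernel upper bound
  have hKu : ∀ v v', 0 < v → 0 < v' → K v v' ≤ H₁ * G₁ * (w v * w v') := by
    intro v v' hv hv'
    rw [hK.K_eq v v' hv.le hv'.le (by linarith)]
    have hmem : v / (v + v') ∈ Icc (0:ℝ) 1 :=
      ⟨by positivity, by rw [div_le_one (by linarith)]; linarith⟩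
    have hg0 : 0 ≤ g (v / (v + v')) := le_trans
      (mul_nonneg hK.G₀_pos.le (Real.rpow_nonneg (abs_nonneg _) _)) (hK.g_lower _ hmem)
    have h1 := hK.h_upper v v' hv.le hv'.le
    have p1 := Real.rpow_nonneg hv.le γ
    have p2 := Real.rpow_nonneg hv'.le γ
    have h2 : v ^ γ + v' ^ γ ≤ w v * w v' := by
      simp only [hw_def]; nlinarith [mul_nonneg p1 p2]
    have hH := hK.H₁_pos
    have hG := hK.G₁_pos
    calc h v v' * g (v / (v + v')) ≤ (H₁ * (v ^ γ + v' ^ γ)) * g (v / (v + v')) :=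
          mul_le_mul_of_nonneg_right h1 hg0
      _ ≤ (H₁ * (v ^ γ + v' ^ γ)) * G₁ :=
          mul_le_mul_of_nonneg_left (hK.g_upper _ hmem) (by positivity)
      _ = H₁ * G₁ * (v ^ γ + v' ^ γ) := by ring
      _ ≤ _ := mul_le_mul_of_nonneg_left h2 (by positivity)
  have hHG : 0 < H₁ * G₁ := mul_pos hK.H₁_pos hK.G₁_pos
  -- kernel lower bound
  obtain ⟨κ, hκ, hκK⟩ : ∃ κ : ℝ, 0 < κ ∧ ∀ v v', |v - x₁| < η₀ / 2 → |v' - x₂| < η₀ / 2 →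
      κ ≤ K v v' := by
    have hR0 : 0 < x₂ + 1 + 2 / x₁ := by positivity
    obtain ⟨CR, hCR, hCRh⟩ := hK.h_posOn (x₂ + 1 + 2 / x₁) hR0
    set d := η₀ / (x₁ + x₂ + η₀) with hd
    have hd0 : 0 < d := by positivity
    refine ⟨CR * (G₀ * d ^ k), mul_pos hCR (mul_pos hK.G₀_pos (Real.rpow_pos_of_pos hd0 _)), ?_⟩
    intro v v' hv hv'
    obtain ⟨hv1, hv2⟩ := abs_lt.1 hv
    obtain ⟨hv1', hv2'⟩ := abs_lt.1 hv'
    have h0 : 0 < v := by linarith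
    have h0' : 0 < v' := by linarith
    have hinv : 1 / (x₂ + 1 + 2 / x₁) ≤ x₁ / 2 := by
      rw [div_le_iff₀ hR0]
      have : x₁ / 2 * (x₂ + 1 + 2 / x₁) = x₁ / 2 * (x₂ + 1) + 1 := by field_simp
      rw [this]
      have : 0 ≤ x₁ / 2 * (x₂ + 1) := by positivity
      linarith
    have h2x : 0 < 2 / x₁ := by positivity
    have hh := hCRh v ⟨by linarith, by linarith⟩ v' ⟨by linarith, by linarith⟩
    rw [hK.K_eq v v' h0.le h0'.le (by linarith)]
    have hmem : v / (v + v') ∈ Icc (0:ℝ) 1 :=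
      ⟨by positivity, by rw [div_le_one (by linarith)]; linarith⟩
    have hdl : d ≤ |v / (v + v') - 1 / 2| := by
      have e : v / (v + v') - 1 / 2 = -((v' - v) / (2 * (v + v'))) := by
        field_simp; ring
      rw [e, abs_neg]
      refine le_trans ?_ (le_abs_self _)
      rw [hd, div_le_div_iff₀ (by linarith) (by linarith)]
      nlinarith
    have hg1 : G₀ * d ^ k ≤ g (v / (v + v')) := le_trans
      (mul_le_mul_of_nonneg_left (Real.rpow_le_rpow hd0.le hdl (by linarith [hK.k_ge_one]))
        hK.G₀_pos.le) (hK.g_lower _ hmem)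
    exact mul_le_mul hh hg1 (mul_nonneg hK.G₀_pos.le (Real.rpow_nonneg hd0.le _)) (hCR.le.trans hh)
  -- integrand
  set F : ℝ → ℝ → ℝ := fun v v' => K v v' * (c (v + v') - c v - c v') with hF_def
  set S : Set (ℝ × ℝ) := Ioi 0 ×ˢ Ioi 0 with hS_def
  have hSo : IsOpen S := isOpen_Ioi.prod isOpen_Ioi
  set F' : ℝ → ℝ → ℝ := fun v v' => S.indicator (Function.uncurry F) (v, v') with hF'_def
  have hFF' : ∀ v v', 0 < v → 0 < v' → F' v v' = F v v' := by
    intro v v' hv hv'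
    have : (v, v') ∈ S := ⟨hv, hv'⟩
    simp only [hF'_def, Set.indicator_of_mem this, Function.uncurry]
  have hF'm : Measurable (Function.uncurry F') := by
    have e : Function.uncurry F' = S.piecewise (Function.uncurry F) (fun _ => (0:ℝ)) := by
      funext p
      by_cases hp : p ∈ S
      · rw [Set.piecewise_eq_of_mem _ _ _ hp]
        exact Set.indicator_of_mem hp _
      · rw [Set.piecewise_eq_of_notMem _ _ _ hp]
        exact Set.indicator_of_notMem hp _
    rw [e]
    refine ContinuousOn.measurable_piecewise ?_ continuousOn_const hSo.measurableSet
    have hKc : ContinuousOn (fun p : ℝ × ℝ => K p.1 p.2) S := by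
      have h1 : ContinuousOn (fun p : ℝ × ℝ => h p.1 p.2 * g (p.1 / (p.1 + p.2))) S := by
        refine (hK.h_cont.mono ?_).mul (hK.g_cont.comp ?_ ?_)
        · rintro p ⟨h1, h2⟩
          exact ⟨mem_Ici.2 (le_of_lt h1), mem_Ici.2 (le_of_lt h2)⟩
        · refine ContinuousOn.div (by fun_prop) (by fun_prop) ?_
          rintro p ⟨h1, h2⟩
          simp only [mem_Ioi] at h1 h2
          linarith
        · rintro p ⟨h1, h2⟩
          simp only [mem_Ioi] at h1 h2
          exact ⟨by positivity, by rw [div_le_one (by linarith)]; linarith⟩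
      refine h1.congr ?_
      rintro p ⟨h1, h2⟩
      simp only [mem_Ioi] at h1 h2
      exact hK.K_eq _ _ h1.le h2.le (by linarith)
    refine hKc.mul (Continuous.continuousOn ?_)
    fun_prop
  -- bounds on the integrand
  set W := 1 + (x₁ + x₂ + 5 * η₀ / 2) ^ γ with hW_def
  have hcw : ∀ v, 0 < v → w v * c v ≤ W * c v := by
    intro v hv
    by_cases hcv : |v - (x₁ + x₂)| < 5 * η₀ / 2
    · refine mul_le_mul_of_nonneg_right ?_ (hc0 v)
      have := (abs_lt.1 hcv).2
      have := Real.rpow_le_rpow hv.le (by linarith : v ≤ x₁ + x₂ + 5 * η₀ / 2) hγ0.le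
      simp only [hw_def, hW_def]; linarith
    · have : c v = 0 := tent_zero _ _ _ hcv
      simp [this]
  have hW0 : 0 ≤ W := by
    have := Real.rpow_nonneg (by linarith : (0:ℝ) ≤ x₁ + x₂ + 5 * η₀ / 2) γ
    simp only [hW_def]; linarith
  set D := H₁ * G₁ * W with hD_def
  have hD0 : 0 ≤ D := mul_nonneg hHG.le hW0
  have hFb : ∀ v v', 0 < v → 0 < v' → |F' v v'| ≤ (H₁ * G₁ * 9) * (w v * w v') := by
    intro v v' hv hv'
    rw [hFF' v v' hv hv']
    have hk0 := hK.K_nonneg v v' hv.le hv'.le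
    have h1 : |c (v + v') - c v - c v'| ≤ 9 := by
      rw [abs_le]
      constructor <;> linarith [hc0 v, hc0 v', hc0 (v + v'), hc3 v, hc3 v', hc3 (v + v')]
    simp only [hF_def]
    rw [abs_mul, abs_of_nonneg hk0]
    calc K v v' * |c (v + v') - c v - c v'| ≤ K v v' * 9 := mul_le_mul_of_nonneg_left h1 hk0
      _ ≤ (H₁ * G₁ * (w v * w v')) * 9 := mul_le_mul_of_nonneg_right (hKu v v' hv hv') (by norm_num)
      _ = _ := by ring
  have hloss : ∀ v v', 0 < v → 0 < v' → K v v' * c v ≤ D * (w v' * c v) := by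
    intro v v' hv hv'
    have hw' : 0 ≤ w v' := by linarith [hw1 v' hv']
    calc K v v' * c v ≤ H₁ * G₁ * (w v * w v') * c v :=
          mul_le_mul_of_nonneg_right (hKu v v' hv hv') (hc0 v)
      _ = (H₁ * G₁ * w v') * (w v * c v) := by ring
      _ ≤ (H₁ * G₁ * w v') * (W * c v) :=
          mul_le_mul_of_nonneg_left (hcw v hv) (mul_nonneg hHG.le hw')
      _ = _ := by rw [hD_def]; ring
  have hloss' : ∀ v v', 0 < v → 0 < v' → K v v' * c v' ≤ D * (w v * c v') := by
    intro v v' hv hv'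
    have hw' : 0 ≤ w v := by linarith [hw1 v hv]
    calc K v v' * c v' ≤ H₁ * G₁ * (w v * w v') * c v' :=
          mul_le_mul_of_nonneg_right (hKu v v' hv hv') (hc0 v')
      _ = (H₁ * G₁ * w v) * (w v' * c v') := by ring
      _ ≤ (H₁ * G₁ * w v) * (W * c v') :=
          mul_le_mul_of_nonneg_left (hcw v' hv') (mul_nonneg hHG.le hw')
      _ = _ := by rw [hD_def]; ring
  have hgain : ∀ v v', 0 < v → 0 < v' → (κ * η₀) * (a v * b v') ≤ K v v' * c (v + v') := by
    intro v v' hv hv'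
    have hk0 := hK.K_nonneg v v' hv.le hv'.le
    have hr : 0 ≤ K v v' * c (v + v') := mul_nonneg hk0 (hc0 _)
    by_cases h1 : |v - x₁| < η₀ / 2
    · by_cases h2 : |v' - x₂| < η₀ / 2
      · have hk := hκK v v' h1 h2
        have hcl : η₀ ≤ c (v + v') := by
          refine le_trans ?_ (le_max_right _ _)
          have : |v + v' - (x₁ + x₂)| ≤ η₀ := by
            rw [abs_le]
            constructor <;> linarith [(abs_lt.1 h1).1, (abs_lt.1 h1).2, (abs_lt.1 h2).1,
              (abs_lt.1 h2).2]
          linarith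
        have hab : a v * b v' ≤ 1 := mul_le_one₀ (ha1 v) (hb0 v') (hb1 v')
        calc (κ * η₀) * (a v * b v') ≤ (κ * η₀) * 1 :=
              mul_le_mul_of_nonneg_left hab (by positivity)
          _ = κ * η₀ := mul_one _
          _ ≤ _ := mul_le_mul hk hcl hη.le hk0
      · have : b v' = 0 := tent_zero _ _ _ h2
        rw [this]; simpa using hr
    · have : a v = 0 := tent_zero _ _ _ h1
      rw [this]; simpa using hr
  have hFl : ∀ v v', 0 < v → 0 < v' →
      (κ * η₀) * (a v * b v') - D * (w v' * c v) - D * (w v * c v') ≤ F' v v' := by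
    intro v v' hv hv'
    rw [hFF' v v' hv hv']
    have h1 := hgain v v' hv hv'
    have h2 := hloss v v' hv hv'
    have h3 := hloss' v v' hv hv'
    have : F v v' = K v v' * c (v + v') - K v v' * c v - K v v' * c v' := by
      simp only [hF_def]; ring
    rw [this]; linarith
  set A : ℝ → ℝ := fun s => ∫ v, (∫ v', F v v' ∂(f s)) ∂(f s) with hA_def
  have hAA' : ∀ s ∈ Icc (0:ℝ) T, ∫ v, (∫ v', F' v v' ∂(f s)) ∂(f s) = A s := by
    intro s hs
    refine integral_congr_ae ((hpos s hs).mono fun v hv => ?_)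
    exact integral_congr_ae ((hpos s hs).mono fun v' hv' => hFF' v v' hv hv')
  have hslice := fun s (hs : s ∈ Icc (0:ℝ) T) =>
    have := hfinm s hs
    aux_slice (f s) (hpos s hs) w a b c (hmom s hs).1 C (hmom s hs).2
      (fun v hv => by linarith [hw1 v hv]) (tent_integrable _ _ _) (tent_integrable _ _ _)
      (tent_integrable _ _ _) hc0 F' hF'm (H₁ * G₁ * 9) (κ * η₀) D (by positivity) hD0 hFb hFl
  have hAint : IntegrableOn A (Icc 0 T) := by
    have hm := aux_meas f T C hfinm hmass hf.time_cont F' hF'm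
    have hm' : AEStronglyMeasurable A (volume.restrict (Icc 0 T)) := by
      refine hm.congr ?_
      filter_upwards [ae_restrict_mem measurableSet_Icc] with s hs using hAA' s hs
    refine Integrable.mono' (integrable_const (H₁ * G₁ * 9 * C ^ 2)) hm' ?_
    filter_upwards [ae_restrict_mem measurableSet_Icc] with s hs
    rw [← hAA' s hs]
    exact (hslice s hs).1
  have h0T : (0:ℝ) ∈ Icc (0:ℝ) T := ⟨le_rfl, hT.le⟩
  have hbdd : ∀ x r : ℝ, 0 ≤ r → ContinuousOn (fun t => ∫ v, tent x r v ∂(f t)) (Icc 0 T) :=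
    fun x r hr => hf.time_cont _ (tent_cont x r) ⟨r, fun v => by
      rw [abs_of_nonneg (tent_nonneg x r v)]; exact tent_le x r v hr⟩
  have hstart_eq : ∀ x r : ℝ, r < x → ∫ v, tent x r v ∂(f 0) = ∫ v, tent x r v ∂fin := by
    intro x r hr
    have := hf.weak_form _ (tent_cont x r) (tent_compact x r) (tent_tsupport_pos x r hr) 0 h0T
    rw [intervalIntegral.integral_same, mul_zero] at this
    linarith
  intro t ht
  have hty : 0 < ∫ v, c v ∂(f t) := by
    refine aux_gronwall T (D * C) (mul_nonneg hD0 hC0) (fun t => ∫ v, c v ∂(f t))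
      (fun s => 1 / 2 * A s)
      (fun s => 1 / 2 * (κ * η₀) * ((∫ v, a v ∂(f s)) * (∫ v, b v ∂(f s))))
      (hbdd _ _ (by linarith)) (fun s _ => integral_nonneg hc0) (hAint.const_mul _) ?_ ?_ ?_ ?_ ?_ t ht
    · intro s hs
      have := hf.weak_form c hcc (tent_compact _ _) (tent_tsupport_pos _ _ (by linarith)) s hs
      rw [intervalIntegral.integral_const_mul, ← this]
      simp only [hc_def]
      rw [hstart_eq _ _ (by linarith)]
    · exact continuousOn_const.mul ((hbdd _ _ (by linarith)).mul (hbdd _ _ (by linarith)))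
    · intro s hs
      exact mul_nonneg (by positivity) (mul_nonneg (integral_nonneg ha0) (integral_nonneg hb0))
    · refine mul_pos (by positivity) (mul_pos ?_ ?_)
      · rw [ha_def, hstart_eq _ _ (by linarith)]
        exact (tent_integral_pos fin _ _).2 hA
      · rw [hb_def, hstart_eq _ _ (by linarith)]
        exact (tent_integral_pos fin _ _).2 hB
    · intro s hs
      have := (hslice s hs).2
      rw [hAA' s hs] at this
      linarith
  have ht' : t ∈ Icc (0:ℝ) T := ⟨ht.1.le, ht.2⟩
  have := hfinm t ht'
  have hball := (tent_integral_pos (f t) _ _).1 hty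
  refine ⟨(f t (Metric.ball (x₁ + x₂) (5 * η₀ / 2))).toReal,
    ENNReal.toReal_pos hball.ne' (measure_ne_top _ _), ENNReal.ofReal_toReal_le⟩
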